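/- Suppose Θ ⊆ ℝ^m is compact and convex with nonempty interior and θ_0 ∈ Θ, and that for every follower i and target k the maps θ ↦ U_i^c(θ,t_k) and θ ↦ U_i^u(θ,t_k) are differentiable (in particular continuous) on Θ. Then the SLMF Stackelberg security game with deception 𝓗²(Θ) admits a Deception Strong Stackelberg Equilibrium: a triple (x*, y*, θ*) with θ* ∈ Θ, x* ∈ Ω_l, y* ∈ BR(x*, θ*) such that U_l(x*, y*) ≥ U_l(x, y) for every θ' ∈ Θ, every x ∈ Ω_l, and every y ∈ BR(x, θ'). -/

import Mathlib

open scoped BigOperators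

noncomputable section

/-- Simplex-type strategy set with total resource `r` over `K` targets. -/
def stratSet {K : ℕ} (r : ℝ) : Set (Fin K → ℝ) :=
  {x | ∑ k, x k = r ∧ ∀ k, 0 ≤ x k}

/-- Leader's utility. -/
def Ul {n K : ℕ} (Rl : ℝ) (Ulc Ulu : Fin K → ℝ)
    (x : Fin K → ℝ) (y : Fin n → Fin K → ℝ) : ℝ :=
  ∑ k, (∑ i, y i k) * (x k * Ulc k + (Rl - x k) * Ulu k)

/-- A follower's utility, with per-target covered/uncovered payoffs `Uc`, `Uu`
(the observation parameter is already substituted). -/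
def Uf {K : ℕ} (Rl : ℝ) (Uc Uu : Fin K → ℝ) (x yi : Fin K → ℝ) : ℝ :=
  ∑ k, yi k * (x k * Uc k + (Rl - x k) * Uu k)

/-- Best-response set of a follower with resource `Ri` against leader strategy `x`. -/
def BRi {K : ℕ} (Rl Ri : ℝ) (Uc Uu : Fin K → ℝ) (x : Fin K → ℝ) :
    Set (Fin K → ℝ) :=
  {yi | yi ∈ stratSet Ri ∧
    ∀ zi ∈ stratSet (K := K) Ri, Uf Rl Uc Uu x zi ≤ Uf Rl Uc Uu x yi}

/-- The auxiliary solution set SOL(y, θ′) (follower utilities already evaluated at θ′):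
pairs (y′, λ) with y′ ∈ Ω_f, λ > 0,
Σᵢ (y′)ᵢᵏ (Uᵢᵘ − Uᵢᶜ)/(U_lᶜ − U_lᵘ) = λ Σᵢ yᵢᵏ for all k, and (y′)ᵢᵏ = 0 whenever yᵢᵏ = 0. -/
def SOL {n K : ℕ} (R : Fin n → ℝ) (Ulc Ulu : Fin K → ℝ)
    (Uc Uu : Fin n → Fin K → ℝ) (y : Fin n → Fin K → ℝ) :
    Set ((Fin n → Fin K → ℝ) × ℝ) :=
  {p | (∀ i, p.1 i ∈ stratSet (R i)) ∧ 0 < p.2 ∧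
    (∀ k, ∑ i, p.1 i k * ((Uu i k - Uc i k) / (Ulc k - Ulu k)) = p.2 * ∑ i, y i k) ∧
    (∀ i k, y i k = 0 → p.1 i k = 0)}

/-- gᵢ(x,θ,k), with θ already substituted into `Uc`, `Uu`. -/
def gfun {K : ℕ} (Rl : ℝ) (Uc Uu : Fin K → ℝ) (x : Fin K → ℝ) (k : Fin K) : ℝ :=
  x k * Uc k + (Rl - x k) * Uu k

/-- The argmax target set Γ¹ᵢ(x,θ). -/
def Γ1 {K : ℕ} (Rl : ℝ) (Uc Uu : Fin K → ℝ) (x : Fin K → ℝ) : Set (Fin K) :=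
  {k | ∀ l, gfun Rl Uc Uu x l ≤ gfun Rl Uc Uu x k}

/-!
The leader controls the pair `(θ, x)`. Best responses are cut out of a compact product by the weak
inequalities `uᵢ (θ, x) z ≤ uᵢ (θ, x) yᵢ`, one for each follower `i` and each deviation `z`, and
both sides are continuous on that product. So the graph of the best-response correspondence is
compact, and the leader's utility attains its maximum on it; a maximizer over the graph is a strong
equilibrium, ties among best responses being broken in the leader's favour.
-/

section Stackelberg

open Set

theorem isCompact_setOf_forall_le {ι : Sort*} {A β : Type*} [TopologicalSpace A]
    [TopologicalSpace β] [Preorder β] [OrderClosedTopology β] {s : Set A} {f g : ι → A → β}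
    (hs : IsCompact s) (hf : ∀ j, ContinuousOn (f j) s) (hg : ∀ j, ContinuousOn (g j) s) :
    IsCompact {a ∈ s | ∀ j, f j a ≤ g j a} := by
  have relatively_closed (j : ι) : ∃ C, IsClosed C ∧ {a | f j a ≤ g j a} ∩ s = C ∩ s :=
    continuousOn_iff_isClosed.1 ((hf j).prodMk (hg j)) _ OrderClosedTopology.isClosed_le'
  choose C hC hCs using relatively_closed
  have inter_eq : {a ∈ s | ∀ j, f j a ≤ g j a} = s ∩ ⋂ j, C j := by
    ext a
    simp only [mem_inter_iff, mem_iInter, mem_ofPred_eq]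
    refine and_congr_right fun ha => forall_congr' fun j => ?_
    simpa [ha] using Set.ext_iff.1 (hCs j) a
  exact inter_eq ▸ hs.inter_right (isClosed_iInter hC)

/-- The set of maximizers of `f` over `s`: the best responses of a player with strategy set `s` and
utility `f`. -/
def argmaxOn {Y β : Type*} [Preorder β] (f : Y → β) (s : Set Y) : Set Y :=
  {y ∈ s | IsMaxOn f s y}

variable {ι A β : Type*} {Y : ι → Type*} [TopologicalSpace A] [∀ i, TopologicalSpace (Y i)]
  [TopologicalSpace β] {S : Set A} {T : ∀ i, Set (Y i)} {u : ∀ i, A → Y i → β}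

theorem isCompact_graph_pi_argmaxOn [Preorder β] [OrderClosedTopology β]
    (hS : IsCompact S) (hT : ∀ i, IsCompact (T i))
    (hu : ∀ i, ContinuousOn (fun p : A × Y i => u i p.1 p.2) (S ×ˢ T i)) :
    IsCompact {p : A × ∀ i, Y i |
      p.1 ∈ S ∧ p.2 ∈ univ.pi fun i => argmaxOn (u i p.1) (T i)} := by
  have deviation_continuous (j : Σ i, T i) :
      ContinuousOn (fun p : A × ∀ i, Y i => u j.1 p.1 j.2) (S ×ˢ univ.pi T) :=
    (hu j.1).comp (f := fun p : A × ∀ i, Y i => (p.1, (j.2 : Y j.1))) (by fun_prop)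
      fun p hp => ⟨hp.1, j.2.2⟩
  have response_continuous (j : Σ i, T i) :
      ContinuousOn (fun p : A × ∀ i, Y i => u j.1 p.1 (p.2 j.1)) (S ×ˢ univ.pi T) :=
    (hu j.1).comp (f := fun p : A × ∀ i, Y i => (p.1, p.2 j.1)) (by fun_prop)
      fun p hp => ⟨hp.1, hp.2 j.1 trivial⟩
  convert isCompact_setOf_forall_le (hS.prod (isCompact_univ_pi hT))
    deviation_continuous response_continuous using 1
  ext p
  simp only [argmaxOn, isMaxOn_iff, mem_prod, mem_univ_pi, mem_ofPred_eq, Sigma.forall,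
    Subtype.forall, forall_and, and_assoc]

theorem exists_strongStackelberg [LinearOrder β] [OrderClosedTopology β] {γ : Type*}
    [LinearOrder γ] {v : A → (∀ i, Y i) → γ}
    (hS : IsCompact S) (hS₀ : S.Nonempty) (hT : ∀ i, IsCompact (T i)) (hT₀ : ∀ i, (T i).Nonempty)
    (hu : ∀ i, ContinuousOn (fun p : A × Y i => u i p.1 p.2) (S ×ˢ T i))
    (hv : UpperSemicontinuousOn (fun p : A × ∀ i, Y i => v p.1 p.2) (S ×ˢ univ.pi T)) :
    ∃ a ∈ S, ∃ y ∈ univ.pi fun i => argmaxOn (u i a) (T i),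
      ∀ a' ∈ S, ∀ y' ∈ univ.pi fun i => argmaxOn (u i a') (T i), v a' y' ≤ v a y := by
  let graph := {p : A × ∀ i, Y i | p.1 ∈ S ∧ p.2 ∈ univ.pi fun i => argmaxOn (u i p.1) (T i)}
  have graph_subset : graph ⊆ S ×ˢ univ.pi T := fun p hp => ⟨hp.1, fun i hi => (hp.2 i hi).1⟩
  have graph_nonempty : graph.Nonempty := by
    obtain ⟨a, ha⟩ := hS₀
    have best_response (i : ι) : (argmaxOn (u i a) (T i)).Nonempty :=
      (hT i).exists_isMaxOn (hT₀ i) ((hu i).uncurry_left a ha)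
    choose y hy using best_response
    exact ⟨(a, y), ha, fun i _ => hy i⟩
  obtain ⟨⟨a, y⟩, ⟨ha, hy⟩, hmax⟩ := (hv.mono graph_subset).exists_isMaxOn graph_nonempty
    (isCompact_graph_pi_argmaxOn hS hT hu)
  exact ⟨a, ha, y, hy, fun a' ha' y' hy' => hmax (show (a', y') ∈ graph from ⟨ha', hy'⟩)⟩

end Stackelberg

section SecurityGame

variable {n K : ℕ} {r : ℝ}

theorem isCompact_stratSet : IsCompact (stratSet (K := K) r) := by
  have eq_inter : stratSet (K := K) r = Set.Icc 0 (fun _ => r) ∩ {x | ∑ k, x k = r} := by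
    ext x
    refine ⟨fun ⟨hsum, hpos⟩ => ⟨⟨hpos, fun k => ?_⟩, hsum⟩, fun ⟨hx, hsum⟩ => ⟨hsum, hx.1⟩⟩
    exact hsum ▸ Finset.single_le_sum (fun j _ => hpos j) (Finset.mem_univ k)
  rw [eq_inter]
  exact isCompact_Icc.inter_right (isClosed_eq (by fun_prop) continuous_const)

theorem single_mem_stratSet (k : Fin K) (hr : 0 ≤ r) : Pi.single k r ∈ stratSet r :=
  ⟨by simp, show (0 : Fin K → ℝ) ≤ Pi.single k r from Pi.single_nonneg.2 hr⟩

theorem BRi_eq_argmaxOn (Rl Ri : ℝ) (Uc Uu x : Fin K → ℝ) :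
    BRi Rl Ri Uc Uu x = argmaxOn (Uf Rl Uc Uu x) (stratSet Ri) := rfl

theorem continuous_Ul {A : Type*} [TopologicalSpace A] (Rl : ℝ) (Ulc Ulu : Fin K → ℝ)
    {x : A → Fin K → ℝ} {y : A → Fin n → Fin K → ℝ} (hx : Continuous x) (hy : Continuous y) :
    Continuous fun a => Ul Rl Ulc Ulu (x a) (y a) := by
  unfold Ul
  fun_prop

theorem continuousOn_Uf {A : Type*} [TopologicalSpace A] {s : Set A} (Rl : ℝ)
    {Uc Uu x y : A → Fin K → ℝ} (hUc : ContinuousOn Uc s) (hUu : ContinuousOn Uu s)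
    (hx : ContinuousOn x s) (hy : ContinuousOn y s) :
    ContinuousOn (fun a => Uf Rl (Uc a) (Uu a) (x a) (y a)) s := by
  unfold Uf
  fun_prop

theorem exists_DSSE_general {X : Type*} [TopologicalSpace X] {Θ : Set X} {Rl : ℝ} {R : Fin n → ℝ}
    (hK : 1 ≤ K) (hRl : 0 ≤ Rl) (hR : ∀ i, 0 ≤ R i) (Ulc Ulu : Fin K → ℝ)
    {Uic Uiu : Fin n → X → Fin K → ℝ} (hΘ : IsCompact Θ) (hΘ₀ : Θ.Nonempty)
    (hUic : ∀ i k, ContinuousOn (fun θ => Uic i θ k) Θ)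
    (hUiu : ∀ i k, ContinuousOn (fun θ => Uiu i θ k) Θ) :
    ∃ θstar ∈ Θ, ∃ x ∈ stratSet (K := K) Rl, ∃ y : Fin n → Fin K → ℝ,
      (∀ i, y i ∈ BRi Rl (R i) (Uic i θstar) (Uiu i θstar) x) ∧
      (∀ θ' ∈ Θ, ∀ x' ∈ stratSet (K := K) Rl, ∀ y' : Fin n → Fin K → ℝ,
        (∀ i, y' i ∈ BRi Rl (R i) (Uic i θ') (Uiu i θ') x') →
        Ul Rl Ulc Ulu x' y' ≤ Ul Rl Ulc Ulu x y) := by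
  have strat_nonempty {r : ℝ} (hr : 0 ≤ r) : (stratSet (K := K) r).Nonempty :=
    ⟨_, single_mem_stratSet ⟨0, hK⟩ hr⟩
  have observed_continuous {U : Fin n → X → Fin K → ℝ}
      (hU : ∀ i k, ContinuousOn (fun θ => U i θ k) Θ) (i : Fin n) :
      ContinuousOn (fun p : (X × (Fin K → ℝ)) × (Fin K → ℝ) => U i p.1.1)
        ((Θ ×ˢ stratSet Rl) ×ˢ stratSet (R i)) :=
    (continuousOn_pi.2 (hU i)).comp (by fun_prop) fun p hp => hp.1.1
  have leader_continuous :
      Continuous fun p : (X × (Fin K → ℝ)) × (Fin n → Fin K → ℝ) => Ul Rl Ulc Ulu p.1.2 p.2 :=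
    continuous_Ul Rl Ulc Ulu (by fun_prop) (by fun_prop)
  obtain ⟨⟨θ, x⟩, ⟨hθ, hx⟩, y, hy, hmax⟩ := exists_strongStackelberg
    (u := fun i a => Uf Rl (Uic i a.1) (Uiu i a.1) a.2) (v := fun a => Ul Rl Ulc Ulu a.2)
    (hΘ.prod isCompact_stratSet) (hΘ₀.prod (strat_nonempty hRl))
    (fun i => isCompact_stratSet) (fun i => strat_nonempty (hR i))
    (fun i => continuousOn_Uf Rl (observed_continuous hUic i) (observed_continuous hUiu i)
      (by fun_prop) (by fun_prop))
    (leader_continuous.upperSemicontinuous.upperSemicontinuousOn _)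
  simp only [BRi_eq_argmaxOn]
  exact ⟨θ, hθ, x, hx, y, fun i => hy i trivial,
    fun θ' hθ' x' hx' y' hy' => hmax (θ', x') ⟨hθ', hx'⟩ y' fun i _ => hy' i⟩

end SecurityGame

/-- existence of a Deception Strong Stackelberg Equilibrium of 𝓗²(Θ). -/
theorem exists_DSSE
    (n K m : ℕ) (hn : 1 ≤ n) (hK : 1 ≤ K)
    (Rl : ℝ) (hRl : 0 < Rl) (R : Fin n → ℝ) (hR : ∀ i, 0 < R i)
    (Ulc Ulu : Fin K → ℝ)
    (Uic Uiu : Fin n → EuclideanSpace ℝ (Fin m) → Fin K → ℝ)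
    (θ0 : EuclideanSpace ℝ (Fin m))
    (Θ : Set (EuclideanSpace ℝ (Fin m)))
    (hΘc : IsCompact Θ) (hΘconv : Convex ℝ Θ)
    (hΘint : (interior Θ).Nonempty) (hθ0 : θ0 ∈ Θ)
    (hdc : ∀ i k, DifferentiableOn ℝ (fun θ => Uic i θ k) Θ)
    (hdu : ∀ i k, DifferentiableOn ℝ (fun θ => Uiu i θ k) Θ) :
    ∃ θstar ∈ Θ, ∃ x ∈ stratSet (K := K) Rl, ∃ y : Fin n → Fin K → ℝ,
      (∀ i, y i ∈ BRi Rl (R i) (Uic i θstar) (Uiu i θstar) x) ∧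
      (∀ θ' ∈ Θ, ∀ x' ∈ stratSet (K := K) Rl, ∀ y' : Fin n → Fin K → ℝ,
        (∀ i, y' i ∈ BRi Rl (R i) (Uic i θ') (Uiu i θ') x') →
        Ul Rl Ulc Ulu x' y' ≤ Ul Rl Ulc Ulu x y) :=
  exists_DSSE_general hK hRl.le (fun i => (hR i).le) Ulc Ulu hΘc ⟨θ0, hθ0⟩
    (fun i k => (hdc i k).continuousOn) fun i k => (hdu i k).continuousOn
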